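/- Suppose W is completely p-reductive with respect to a non-coordinate α ∈ A¹. Then every β ∈ A¹ satisfying the resonance condition for (α,β) at every branch δ ∈ Δ_P of every point P ∈ S — in particular, every β with β∧α = 0 in A²_{W,k} — is a scalar multiple of α. Consequently ker(·∧α : A¹ → A²) = k·α and H¹(A*_{W,k},·∧α) = 0. -/

import Mathlib

/-!
Write `β = l * α` for a function `l` on the components, the ratio `β / α`. Resonance at a branch `δ`
on the component `i` then reads `α i * ∑ δ', (l i - l (φ δ')) * μ(δ, δ') * α (φ δ') = 0`. If `l` is
constant on the fibres of the current surjection `π`, then at a transversal point the only terms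
left in this sum are those on the fibre opposite to `δ`, and it becomes the difference of the two
values of `l` times the sum that transversality requires to be nonzero. So `l` is also constant on
the merged fibre, and at the end of a complete reduction it is constant.

If `β ∧ α = 0`, resonance at `δ` is obtained by applying the linear form
`x ∧ y ↦ x_δ * ∑ y - y_δ * ∑ x` on `Λ² A_P` to the `P`-component of `β ∧ α`. This form sends
`ψ^δ₁ ∧ ψ^δ₂` to the difference of the coordinates `δ₁` and `δ₂` of `ψ^δ`, so it telescopes to zero
on the three-term relations. When all branches at `P` lie on one component, `I_P` is all of
`Λ² A_P`, but then every multiplicity in the `P`-component and in the resonance condition vanishes.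
-/

open scoped Classical

/-- The weak combinatorial type of a plane projective curve. -/
structure WeakComb (p : ℕ) where
  /-- the set of irreducible components -/
  C : Type
  [fintypeC : Fintype C]
  [decEqC : DecidableEq C]
  [nonemptyC : Nonempty C]
  /-- the set of singular points -/
  S : Type
  [fintypeS : Fintype S]
  [decEqS : DecidableEq S]
  /-- the local branches at each singular point -/
  Δ : S → Type
  [fintypeΔ : ∀ P, Fintype (Δ P)]
  [decEqΔ : ∀ P, DecidableEq (Δ P)]
  /-- each branch belongs to a component -/
  φ : ∀ P, Δ P → C
  /-- local intersection multiplicities of pairs of branches -/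
  μ : ∀ P, Δ P → Δ P → ℕ
  μ_symm : ∀ P δ δ', φ P δ ≠ φ P δ' → μ P δ δ' = μ P δ' δ
  μ_pos : ∀ P δ δ', φ P δ ≠ φ P δ' → 0 < μ P δ δ'

attribute [instance] WeakComb.fintypeC WeakComb.decEqC WeakComb.nonemptyC
attribute [instance] WeakComb.fintypeS WeakComb.decEqS WeakComb.fintypeΔ WeakComb.decEqΔ

namespace WeakComb

variable {p : ℕ} (W : WeakComb p)

/-- μ_P(δ,δ') with the convention that it vanishes on pairs of branches of the same component. -/
def muk (P : W.S) (δ δ' : W.Δ P) : ℕ :=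
  if W.φ P δ = W.φ P δ' then 0 else W.μ P δ δ'

/-- μ_P(δ, j): the multiplicity of intersection of the branch δ with the component j. -/
def muC (P : W.S) (δ : W.Δ P) (j : W.C) : ℕ :=
  ∑ δ' : W.Δ P, if W.φ P δ' = j then W.muk P δ δ' else 0

/-- A degree assignment: positive degrees satisfying the Bezout condition. -/
def IsDegree (d : W.C → ℕ) : Prop :=
  (∀ i, 0 < d i) ∧
  ∀ i j, i ≠ j →
    d i * d j = ∑ P : W.S, ∑ δ : W.Δ P, if W.φ P δ = i then W.muC P δ j else 0

/-- The basis vector σ_i of A¹ = (C → ZMod p). -/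
noncomputable def sigma (i : W.C) : W.C → ZMod p := Pi.single i 1

/-- The basis vector ψ_P^δ of A_P = (Δ_P → ZMod p). -/
noncomputable def psi (P : W.S) (δ : W.Δ P) : W.Δ P → ZMod p := Pi.single δ 1

/-- ψ_P^δ ∧ ψ_P^δ' as an element of Λ² A_P. -/
noncomputable def psiW (P : W.S) (δ δ' : W.Δ P) : ⋀[ZMod p]^2 (W.Δ P → ZMod p) :=
  ⟨ExteriorAlgebra.ιMulti (ZMod p) 2 ![W.psi P δ, W.psi P δ'],
   ExteriorAlgebra.ιMulti_range (ZMod p) 2 (Set.mem_range_self _)⟩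

/-- The subspace I_P of Λ² A_P. -/
noncomputable def IP (P : W.S) : Submodule (ZMod p) (⋀[ZMod p]^2 (W.Δ P → ZMod p)) :=
  Submodule.span (ZMod p)
    ({x | ∃ δ1 δ2 δ3 : W.Δ P, x = W.psiW P δ1 δ2 + W.psiW P δ2 δ3 + W.psiW P δ3 δ1} ∪
     {x | (∀ δ δ' : W.Δ P, W.φ P δ = W.φ P δ') ∧ ∃ δ1 δ2 : W.Δ P, x = W.psiW P δ1 δ2})

/-- The degree-two part A² = A^{2,0} ⊕ A^{2,∞} of the Combinatorial Aomoto algebra. -/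
abbrev A2 (d : W.C → ℕ) : Type :=
  ((P : W.S) → (⋀[ZMod p]^2 (W.Δ P → ZMod p)) ⧸ W.IP P) ×
  ({i : W.C // p ∣ d i} → ZMod p)

/-- The wedge product A¹ × A¹ → A², extending σ_i ∧ σ_j bilinearly. -/
noncomputable def wedge (d : W.C → ℕ) (α β : W.C → ZMod p) : W.A2 d :=
  (fun P => ∑ δ : W.Δ P, ∑ δ' : W.Δ P,
      (α (W.φ P δ) * β (W.φ P δ') * (W.muk P δ δ' : ZMod p)) •
        Submodule.Quotient.mk (W.psiW P δ δ'),
   fun i => α i.1 * (∑ j : W.C, (d j : ZMod p) * β j)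
          - β i.1 * (∑ j : W.C, (d j : ZMod p) * α j))

/-- The linear map ·∧α : A¹ → A², β ↦ β ∧ α. -/
noncomputable def wedgeL (d : W.C → ℕ) (α : W.C → ZMod p) :
    (W.C → ZMod p) →ₗ[ZMod p] W.A2 d where
  toFun β := W.wedge d β α
  map_add' β γ := by
    refine Prod.ext ?_ ?_
    · funext P
      simp only [wedge, Pi.add_apply, Prod.fst_add]
      rw [← Finset.sum_add_distrib]
      refine Finset.sum_congr rfl fun δ _ => ?_
      rw [← Finset.sum_add_distrib]
      refine Finset.sum_congr rfl fun δ' _ => ?_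
      rw [← add_smul, add_mul, add_mul]
    · funext i
      simp only [wedge, Pi.add_apply, Prod.snd_add]
      rw [show (∑ x : W.C, (d x : ZMod p) * (β x + γ x))
            = (∑ x : W.C, (d x : ZMod p) * β x) + ∑ x : W.C, (d x : ZMod p) * γ x by
        rw [← Finset.sum_add_distrib]; exact Finset.sum_congr rfl fun x _ => by ring]
      ring
  map_smul' c β := by
    refine Prod.ext ?_ ?_
    · funext P
      simp only [wedge, Pi.smul_apply, smul_eq_mul, RingHom.id_apply, Prod.smul_fst]
      rw [Finset.smul_sum]
      refine Finset.sum_congr rfl fun δ _ => ?_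
      rw [Finset.smul_sum]
      refine Finset.sum_congr rfl fun δ' _ => ?_
      rw [smul_smul]
      ring_nf
    · funext i
      simp only [wedge, Pi.smul_apply, smul_eq_mul, RingHom.id_apply, Prod.smul_snd]
      rw [show (∑ x : W.C, (d x : ZMod p) * (c * β x)) = c * ∑ x : W.C, (d x : ZMod p) * β x by
        rw [Finset.mul_sum]; exact Finset.sum_congr rfl fun x _ => by ring]
      ring

/-- The kernel of ·∧α : A¹ → A². -/
noncomputable def wedgeKer (d : W.C → ℕ) (α : W.C → ZMod p) :
    Submodule (ZMod p) (W.C → ZMod p) :=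
  LinearMap.ker (W.wedgeL d α)

/-- H¹ of the Combinatorial Aomoto complex with differential ·∧α. -/
noncomputable abbrev H1 (d : W.C → ℕ) (α : W.C → ZMod p) :=
  (W.wedgeKer d α) ⧸
    (Submodule.comap (W.wedgeKer d α).subtype (Submodule.span (ZMod p) {α}))

end WeakComb

namespace WeakComb

variable {p : ℕ} (W : WeakComb p)

/-- The resonance condition for (α,β) at the branch δ of the point P. -/
def ResCond (α β : W.C → ZMod p) (P : W.S) (δ : W.Δ P) : Prop :=
  β (W.φ P δ) * (∑ j : W.C, (W.muC P δ j : ZMod p) * α j)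
    - α (W.φ P δ) * (∑ j : W.C, (W.muC P δ j : ZMod p) * β j) = 0

/-- P is a p-transversal point for the pair of components i ≠ j. -/
def PTransPoint (P : W.S) (i j : W.C) : Prop :=
  i ≠ j ∧ (∀ δ : W.Δ P, W.φ P δ = i ∨ W.φ P δ = j) ∧
  (∃ δ : W.Δ P, W.φ P δ = i) ∧ (∃ δ : W.Δ P, W.φ P δ = j) ∧
  ((∃ δ : W.Δ P, W.φ P δ = i ∧ ((W.muC P δ j : ZMod p) ≠ 0)) ∨
   (∃ δ : W.Δ P, W.φ P δ = j ∧ ((W.muC P δ i : ZMod p) ≠ 0)))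

/-- The components i and j are p-transversal at a point. -/
def PTransComponents (i j : W.C) : Prop := ∃ P : W.S, W.PTransPoint P i j

/-- α is non-coordinate if all its coordinates are nonzero. -/
def NonCoordinate (α : W.C → ZMod p) : Prop := ∀ i, α i ≠ 0

end WeakComb

/-- The setoid (partition) obtained from s by merging the classes of c₀ and c₁. -/
def mergeSetoid {α : Type*} (s : Setoid α) (c₀ c₁ : α) : Setoid α :=
  Relation.EqvGen.setoid (fun a b => s.r a b ∨ (a = c₀ ∧ b = c₁))

namespace WeakComb

variable {p : ℕ} (W : WeakComb p)

/-- W is p-transversal at P with respect to (α, π), where the surjection π is encoded by the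
setoid s of its fibres; the two classes π(φ_P(Δ_P)) = {i',j'} are those of c₀ and c₁. -/
def PTransversalAt (α : W.C → ZMod p) (s : Setoid W.C) (P : W.S) (c₀ c₁ : W.C) : Prop :=
  ¬ s.r c₀ c₁ ∧
  (∀ δ : W.Δ P, s.r (W.φ P δ) c₀ ∨ s.r (W.φ P δ) c₁) ∧
  (∃ δ : W.Δ P, s.r (W.φ P δ) c₀) ∧ (∃ δ : W.Δ P, s.r (W.φ P δ) c₁) ∧
  ∃ δ : W.Δ P, s.r (W.φ P δ) c₀ ∧
    (∑ δ' : W.Δ P, if s.r (W.φ P δ') c₁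
        then (W.muk P δ δ' : ZMod p) * α (W.φ P δ') else 0) ≠ 0

/-- A p-reduction step with respect to α. -/
def RedStep (α : W.C → ZMod p) (s s' : Setoid W.C) : Prop :=
  ∃ (P : W.S) (c₀ c₁ : W.C), W.PTransversalAt α s P c₀ c₁ ∧ s' = mergeSetoid s c₀ c₁

/-- W is completely p-reductive with respect to α: starting from the identity partition (⊥),
some finite sequence of p-reduction steps reaches the one-class partition (⊤). -/
def CompletelyPReductive (α : W.C → ZMod p) : Prop :=
  Relation.ReflTransGen (W.RedStep α) ⊥ ⊤

/-- β is π-proportional to α, for the surjection π encoded by the setoid s: on each class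
of s, β is a scalar multiple of α. -/
def Proportional (s : Setoid W.C) (α β : W.C → ZMod p) : Prop :=
  ∀ c : W.C, ∃ l : ZMod p, ∀ c', s.r c c' → β c' = l * α c'

end WeakComb

/-- A combinatorial quasi-fiber structure of rank r on W. -/
structure QuasiFiber {p : ℕ} (W : WeakComb p) (r : ℕ) where
  /-- which quasi-fiber each component belongs to -/
  g : W.C → Fin r
  g_surj : Function.Surjective g
  /-- multiplicities of components inside the quasi-fibers -/
  m : W.C → ℕ
  m_pos : ∀ c, 0 < m c
  /-- the set of base points -/
  B : Set W.S
  fiber_off_base : ∀ P : W.S, P ∉ B → ∀ δ δ' : W.Δ P, g (W.φ P δ) = g (W.φ P δ')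

namespace WeakComb

variable {p : ℕ} (W : WeakComb p) {r : ℕ}

/-- M_s(δ) for a branch δ at a base point P. -/
noncomputable def Mcoef (F : QuasiFiber W r) (P : W.S) (δ : W.Δ P) (s : Fin r) : ZMod p :=
  ∑ δ' : W.Δ P,
    if W.φ P δ' ≠ W.φ P δ ∧ F.g (W.φ P δ') = s
      then ((F.m (W.φ P δ') * W.μ P δ δ' : ℕ) : ZMod p) else 0

/-- ω_a = Σ_c m_c · a_{g(c)} · σ_c ∈ A¹. -/
noncomputable def omega (F : QuasiFiber W r) (a : Fin r → ZMod p) : W.C → ZMod p :=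
  fun c => (F.m c : ZMod p) * a (F.g c)

/-- The restricted combinatorics W°_s of the quasi-fiber s. -/
noncomputable def restrict (F : QuasiFiber W r) (s : Fin r) : WeakComb p where
  C := {c : W.C // F.g c = s}
  fintypeC := Fintype.ofFinite _
  decEqC := inferInstance
  nonemptyC := by obtain ⟨c, hc⟩ := F.g_surj s; exact ⟨⟨c, hc⟩⟩
  S := {P : W.S // Nonempty (W.Δ P) ∧ ∀ δ : W.Δ P, F.g (W.φ P δ) = s}
  fintypeS := Fintype.ofFinite _
  decEqS := inferInstance
  Δ := fun P => W.Δ P.1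
  fintypeΔ := fun P => inferInstance
  decEqΔ := fun P => inferInstance
  φ := fun P δ => ⟨W.φ P.1 δ, P.2.2 δ⟩
  μ := fun P δ δ' => W.μ P.1 δ δ'
  μ_symm := fun P δ δ' h => W.μ_symm P.1 δ δ' (fun e => h (Subtype.ext e))
  μ_pos := fun P δ δ' h => W.μ_pos P.1 δ δ' (fun e => h (Subtype.ext e))

/-- The restriction ω_a|_s of ω_a to the restricted combinatorics W°_s. -/
noncomputable def omegaRes (F : QuasiFiber W r) (a : Fin r → ZMod p) (s : Fin r) :
    (W.restrict F s).C → ZMod p :=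
  fun c => (F.m c.1 : ZMod p) * a s

end WeakComb

theorem sum_sum_smul_eq_zero_of_comm_of_alternating {R M ι : Type*} [Semiring R] [AddCommMonoid M]
    [Module R M] [Fintype ι] {c : ι → ι → R} {f : ι → ι → M} (hc : ∀ i j, c i j = c j i)
    (hf : ∀ i, f i i = 0) (hswap : ∀ i j, f i j + f j i = 0) :
    ∑ i, ∑ j, c i j • f i j = 0 := by
  -- Cancelling `(i, j)` against `(j, i)` instead of doubling the sum covers characteristic `2`.
  rw [← Fintype.sum_prod_type']
  refine Finset.sum_involution (fun x _ => x.swap) (fun x _ => ?_) (fun x _ hne heq => hne ?_)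
    (fun _ _ => Finset.mem_univ _) (fun x _ => x.swap_swap)
  · rw [Prod.fst_swap, Prod.snd_swap, hc x.2, ← smul_add, hswap, smul_zero]
  · have hdiag : x.2 = x.1 := congrArg Prod.fst heq
    rw [hdiag, hf, smul_zero]

theorem mergeSetoid_le_iff {α : Type*} {s t : Setoid α} {a b : α} :
    mergeSetoid s a b ≤ t ↔ s ≤ t ∧ t a b := by
  constructor
  · intro h
    exact ⟨fun _ _ hxy => h (.rel _ _ (.inl hxy)), h (.rel _ _ (.inr ⟨rfl, rfl⟩))⟩
  · rintro ⟨hst, hab⟩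
    refine Setoid.eqvGen_le ?_
    rintro x y (hxy | ⟨rfl, rfl⟩)
    exacts [hst hxy, hab]

namespace WeakComb

variable {p : ℕ} (W : WeakComb p)

theorem muk_comm (P : W.S) (δ δ' : W.Δ P) : W.muk P δ δ' = W.muk P δ' δ := by
  by_cases h : W.φ P δ = W.φ P δ'
  · simp only [muk, h, if_true]
  · simp only [muk, if_neg h, if_neg (Ne.symm h), W.μ_symm P δ δ' h]

theorem sum_muC_mul (α : W.C → ZMod p) (P : W.S) (δ : W.Δ P) :
    ∑ j, (W.muC P δ j : ZMod p) * α j = ∑ δ', (W.muk P δ δ' : ZMod p) * α (W.φ P δ') := by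
  simp only [muC, Nat.cast_sum, Nat.cast_ite, Nat.cast_zero, Finset.sum_mul, ite_mul, zero_mul]
  rw [Finset.sum_comm]
  simp only [Finset.sum_ite_eq, Finset.mem_univ, if_true]

section Reduction

variable {W} {α l : W.C → ZMod p} {s s' : Setoid W.C} {P : W.S}

theorem resCond_mul_iff {δ : W.Δ P} :
    W.ResCond α (l * α) P δ ↔ α (W.φ P δ) * ∑ δ',
      (l (W.φ P δ) - l (W.φ P δ')) * ((W.muk P δ δ' : ZMod p) * α (W.φ P δ')) = 0 := by
  simp only [ResCond, sum_muC_mul, Pi.mul_apply, Finset.mul_sum, ← Finset.sum_sub_distrib]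
  rw [Finset.sum_congr rfl fun δ' _ => ?_]
  ring

theorem sum_sub_mul_eq_sub_mul_sum_ite (hs : s ≤ Setoid.ker l) {c₀ c₁ : W.C} {δ : W.Δ P}
    (hδ : s (W.φ P δ) c₀) (hcover : ∀ δ', s (W.φ P δ') c₀ ∨ s (W.φ P δ') c₁)
    (f : W.Δ P → ZMod p) :
    ∑ δ', (l (W.φ P δ) - l (W.φ P δ')) * f δ' =
      (l c₀ - l c₁) * ∑ δ', if s (W.φ P δ') c₁ then f δ' else 0 := by
  have hl {a b : W.C} (hab : s a b) : l a = l b := hs hab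
  rw [Finset.mul_sum]
  refine Finset.sum_congr rfl fun δ' _ => ?_
  split_ifs with h₁
  · rw [hl hδ, hl h₁]
  · rw [hl hδ, hl ((hcover δ').resolve_right h₁), sub_self, zero_mul, mul_zero]

theorem PTransversalAt.apply_eq_apply [Fact p.Prime] {c₀ c₁ : W.C}
    (h : W.PTransversalAt α s P c₀ c₁) (hα : W.NonCoordinate α) (hs : s ≤ Setoid.ker l)
    (hres : ∀ δ, W.ResCond α (l * α) P δ) : l c₀ = l c₁ := by
  obtain ⟨-, hcover, -, -, δ, hδ, hsum⟩ := h
  have hprod := (mul_eq_zero.1 (resCond_mul_iff.1 (hres δ))).resolve_left (hα _)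
  rw [sum_sub_mul_eq_sub_mul_sum_ite hs hδ hcover] at hprod
  exact sub_eq_zero.1 ((mul_eq_zero.1 hprod).resolve_right hsum)

theorem RedStep.le_ker [Fact p.Prime] (h : W.RedStep α s s') (hα : W.NonCoordinate α)
    (hres : ∀ P δ, W.ResCond α (l * α) P δ) (hs : s ≤ Setoid.ker l) : s' ≤ Setoid.ker l := by
  obtain ⟨P, c₀, c₁, htrans, rfl⟩ := h
  exact mergeSetoid_le_iff.2 ⟨hs, htrans.apply_eq_apply hα hs (hres P)⟩

theorem le_ker_of_reflTransGen_redStep [Fact p.Prime]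
    (h : Relation.ReflTransGen (W.RedStep α) s s') (hα : W.NonCoordinate α)
    (hres : ∀ P δ, W.ResCond α (l * α) P δ) (hs : s ≤ Setoid.ker l) : s' ≤ Setoid.ker l := by
  induction h with
  | refl => exact hs
  | tail _ hstep ih => exact hstep.le_ker hα hres ih

theorem CompletelyPReductive.exists_eq_smul [Fact p.Prime] {β : W.C → ZMod p}
    (h : W.CompletelyPReductive α) (hα : W.NonCoordinate α)
    (hres : ∀ P δ, W.ResCond α β P δ) : ∃ c : ZMod p, β = c • α := by
  obtain ⟨c₀⟩ := W.nonemptyC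
  have hβ : β / α * α = β := funext fun c => div_mul_cancel₀ _ (hα c)
  have hconst : ⊤ ≤ Setoid.ker (β / α) :=
    le_ker_of_reflTransGen_redStep h hα (hβ.symm ▸ hres) bot_le
  refine ⟨(β / α) c₀, hβ.symm.trans (funext fun c => ?_)⟩
  exact congrArg (· * α c) (hconst (x := c) (y := c₀) trivial)

end Reduction

theorem psiW_eq_ιMulti (P : W.S) (δ δ' : W.Δ P) :
    W.psiW P δ δ' = exteriorPower.ιMulti (ZMod p) 2 ![W.psi P δ, W.psi P δ'] :=
  rfl

theorem psiW_self (P : W.S) (δ : W.Δ P) : W.psiW P δ δ = 0 :=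
  (exteriorPower.ιMulti (ZMod p) 2).map_eq_zero_of_eq _ (i := 0) (j := 1) rfl zero_ne_one

theorem psiW_add_swap (P : W.S) (δ δ' : W.Δ P) : W.psiW P δ δ' + W.psiW P δ' δ = 0 :=
  Subtype.ext (by simp [psiW, ExteriorAlgebra.ιMulti_apply, ExteriorAlgebra.ι_add_mul_swap])

/-- The canonical representative in `Λ² A_P` of the `P`-component of `α ∧ β`. -/
noncomputable def localWedge (P : W.S) (α β : W.C → ZMod p) : ⋀[ZMod p]^2 (W.Δ P → ZMod p) :=
  ∑ δ, ∑ δ', (α (W.φ P δ) * β (W.φ P δ') * (W.muk P δ δ' : ZMod p)) • W.psiW P δ δ'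

theorem wedge_fst_apply (d : W.C → ℕ) (α β : W.C → ZMod p) (P : W.S) :
    (W.wedge d α β).1 P = (W.IP P).mkQ (W.localWedge P α β) := by
  simp only [localWedge, map_sum, map_smul]
  rfl

theorem localWedge_self (P : W.S) (α : W.C → ZMod p) : W.localWedge P α α = 0 :=
  sum_sum_smul_eq_zero_of_comm_of_alternating
    (fun δ δ' => by rw [W.muk_comm, mul_comm (α (W.φ P δ))]) (W.psiW_self P) (W.psiW_add_swap P)

theorem wedge_self (d : W.C → ℕ) (α : W.C → ZMod p) : W.wedge d α α = 0 := by
  refine Prod.ext (funext fun P => ?_) (funext fun i => sub_self _)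
  rw [wedge_fst_apply, localWedge_self, map_zero]
  rfl

/-- The linear form `x ∧ y ↦ x_δ * ∑ y - y_δ * ∑ x` on `Λ² A_P`, which turns the `P`-component of
`β ∧ α` into the resonance expression at the branch `δ`. -/
noncomputable def branchForm (P : W.S) (δ : W.Δ P) :
    Module.Dual (ZMod p) (⋀[ZMod p]^2 (W.Δ P → ZMod p)) :=
  exteriorPower.pairingDual (ZMod p) (W.Δ P → ZMod p) 2
    (exteriorPower.ιMulti (ZMod p) 2 ![LinearMap.proj δ, ∑ ε, LinearMap.proj ε])

theorem branchForm_psiW (P : W.S) (δ δ₁ δ₂ : W.Δ P) :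
    W.branchForm P δ (W.psiW P δ₁ δ₂) = W.psi P δ δ₁ - W.psi P δ δ₂ := by
  rw [psiW_eq_ιMulti, branchForm, exteriorPower.pairingDual_ιMulti_ιMulti, Matrix.det_fin_two]
  simp [psi, Pi.single_apply, eq_comm]

theorem IP_le_ker_branchForm {P : W.S} (hP : ¬ ∀ δ₁ δ₂, W.φ P δ₁ = W.φ P δ₂) (δ : W.Δ P) :
    W.IP P ≤ LinearMap.ker (W.branchForm P δ) := by
  refine Submodule.span_le.2 ?_
  rintro _ (⟨δ₁, δ₂, δ₃, rfl⟩ | ⟨h, -⟩)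
  · simp only [SetLike.mem_coe, LinearMap.mem_ker, map_add, branchForm_psiW]
    ring
  · exact absurd h hP

theorem localWedge_eq_zero_of_forall_eq {P : W.S} (hP : ∀ δ₁ δ₂, W.φ P δ₁ = W.φ P δ₂)
    (α β : W.C → ZMod p) : W.localWedge P α β = 0 :=
  Finset.sum_eq_zero fun δ _ => Finset.sum_eq_zero fun δ' _ => by
    rw [muk, if_pos (hP δ δ'), Nat.cast_zero, mul_zero, zero_smul]

theorem resCond_iff_branchForm_localWedge_eq_zero (α β : W.C → ZMod p) (P : W.S) (δ : W.Δ P) :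
    W.ResCond α β P δ ↔ W.branchForm P δ (W.localWedge P β α) = 0 := by
  rw [ResCond, sum_muC_mul, sum_muC_mul]
  simp only [localWedge, map_sum, map_smul, branchForm_psiW, smul_eq_mul, mul_sub,
    Finset.sum_sub_distrib, psi, Pi.single_apply, mul_ite, mul_one, mul_zero]
  rw [Finset.sum_comm]
  simp only [Finset.sum_ite_eq', Finset.mem_univ, if_true, Finset.mul_sum, W.muk_comm P _ δ]
  simp only [mul_comm, mul_left_comm]

theorem resCond_of_wedge_eq_zero {d : W.C → ℕ} {α β : W.C → ZMod p} (h : W.wedge d β α = 0)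
    (P : W.S) (δ : W.Δ P) : W.ResCond α β P δ := by
  rw [resCond_iff_branchForm_localWedge_eq_zero]
  by_cases hP : ∀ δ₁ δ₂, W.φ P δ₁ = W.φ P δ₂
  · rw [W.localWedge_eq_zero_of_forall_eq hP, map_zero]
  · have hmk : (W.IP P).mkQ (W.localWedge P β α) = 0 := by
      rw [← wedge_fst_apply, h]
      rfl
    exact W.IP_le_ker_branchForm hP δ ((Submodule.Quotient.mk_eq_zero _).1 hmk)

theorem ker_wedgeL_eq_span_singleton_iff {d : W.C → ℕ} {α : W.C → ZMod p} :
    LinearMap.ker (W.wedgeL d α) = Submodule.span (ZMod p) {α} ↔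
      ∀ β, W.wedge d β α = 0 → ∃ c : ZMod p, β = c • α := by
  have hspan : Submodule.span (ZMod p) {α} ≤ LinearMap.ker (W.wedgeL d α) :=
    (Submodule.span_singleton_le_iff_mem _ _).2 (W.wedge_self d α)
  rw [← hspan.ge_iff_eq', SetLike.le_def]
  simp only [Submodule.mem_span_singleton, eq_comm (b := _ • α)]
  rfl

theorem subsingleton_H1_iff {d : W.C → ℕ} {α : W.C → ZMod p} :
    Subsingleton (W.H1 d α) ↔
      LinearMap.ker (W.wedgeL d α) ≤ Submodule.span (ZMod p) {α} := by
  rw [Submodule.Quotient.subsingleton_iff, Submodule.comap_subtype_eq_top, wedgeKer]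

end WeakComb

section Statements

open WeakComb

variable {p : ℕ} [Fact p.Prime]

/-- Proposition `completelypreductive`. -/
theorem stmt6 (W : WeakComb p) (d : W.C → ℕ) (hd : W.IsDegree d)
    (α : W.C → ZMod p) (hnc : W.NonCoordinate α)
    (hred : W.CompletelyPReductive α) :
    (∀ β : W.C → ZMod p,
      (∀ (P : W.S) (δ : W.Δ P), W.ResCond α β P δ) → ∃ c : ZMod p, β = c • α) ∧
    (∀ β : W.C → ZMod p, W.wedge d β α = 0 → ∃ c : ZMod p, β = c • α) ∧
    LinearMap.ker (W.wedgeL d α) = Submodule.span (ZMod p) {α} ∧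
    Subsingleton (W.H1 d α) := by
  have hres : ∀ β : W.C → ZMod p,
      (∀ (P : W.S) (δ : W.Δ P), W.ResCond α β P δ) → ∃ c : ZMod p, β = c • α :=
    fun _ => hred.exists_eq_smul hnc
  have hwedge : ∀ β : W.C → ZMod p, W.wedge d β α = 0 → ∃ c : ZMod p, β = c • α :=
    fun β hβ => hres β (W.resCond_of_wedge_eq_zero hβ)
  have hker : LinearMap.ker (W.wedgeL d α) = Submodule.span (ZMod p) {α} :=
    W.ker_wedgeL_eq_span_singleton_iff.2 hwedge
  exact ⟨hres, hwedge, hker, W.subsingleton_H1_iff.2 hker.le⟩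

end Statements
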